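/- Let 1 < p < 2 and let a, b ∈ ℝⁿ with |a| > |b| > 0. Then (1/(p−1)) · (|a|^{p−1} − |b|^{p−1})/(|a| − |b|) ≤ ∫₀¹ |λa + (1−λ)b|^{p−2} dλ ≤ (1/(p−1)) · (|a|^{p−1} + |b|^{p−1})/(|a| + |b|). -/

import Mathlib

/-!
By the triangle inequality and its reverse, the norm on the segment from `b` to `a` lies between
the absolute values of two affine functions of the parameter `l`:
`|l * ‖a‖ + (1 - l) * (-‖b‖)| ≤ ‖l • a + (1 - l) • b‖ ≤ |l * ‖a‖ + (1 - l) * ‖b‖|`.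
A power with nonpositive exponent reverses these inequalities away from the single zero of the
left-hand side, and when the exponent exceeds `-1` the powers of both affine functions are
integrable with explicit integrals.
-/

open MeasureTheory Set

section AbsRpow

variable {r x y : ℝ}

theorem mul_abs_rpow_of_nonneg (hr : -1 < r) (hx : 0 ≤ x) : x * |x| ^ r = x ^ (r + 1) := by
  rw [abs_of_nonneg hx, Real.rpow_add_one' hx (by linarith), mul_comm]

theorem intervalIntegrable_abs_rpow (hr : -1 < r) :
    IntervalIntegrable (fun u : ℝ => |u| ^ r) volume x y := by
  refine intervalIntegrable_of_even (fun u => by rw [abs_neg]) fun z hz => ?_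
  refine (intervalIntegral.intervalIntegrable_rpow' hr).congr fun u hu => ?_
  rw [uIoc_of_le hz.le] at hu
  simp only [abs_of_pos hu.1]

theorem integral_zero_abs_rpow (hr : -1 < r) : ∫ u in 0..x, |u| ^ r = x * |x| ^ r / (r + 1) := by
  have integral_of_nonneg {z : ℝ} (hz : 0 ≤ z) :
      ∫ u in 0..z, |u| ^ r = z * |z| ^ r / (r + 1) := calc
    ∫ u in 0..z, |u| ^ r = ∫ u in 0..z, u ^ r := by
      refine intervalIntegral.integral_congr fun u hu => ?_
      rw [uIcc_of_le hz] at hu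
      simp only [abs_of_nonneg hu.1]
    _ = z * |z| ^ r / (r + 1) := by
      rw [integral_rpow (Or.inl hr), Real.zero_rpow (by linarith), sub_zero,
        mul_abs_rpow_of_nonneg hr hz]
  rcases le_total 0 x with hx | hx
  · exact integral_of_nonneg hx
  · calc
      ∫ u in 0..x, |u| ^ r = -∫ u in 0..-x, |u| ^ r := by
        rw [← intervalIntegral.integral_symm, ← neg_zero, ← intervalIntegral.integral_comp_neg]
        simp only [abs_neg, neg_zero]
      _ = x * |x| ^ r / (r + 1) := by
        rw [integral_of_nonneg (neg_nonneg.2 hx), abs_neg]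
        ring

theorem integral_abs_rpow (hr : -1 < r) :
    ∫ u in x..y, |u| ^ r = (y * |y| ^ r - x * |x| ^ r) / (r + 1) := by
  rw [← intervalIntegral.integral_interval_sub_left (intervalIntegrable_abs_rpow hr)
    (intervalIntegrable_abs_rpow hr), integral_zero_abs_rpow hr, integral_zero_abs_rpow hr, sub_div]

theorem intervalIntegrable_abs_segment_rpow (hr : -1 < r) (hxy : x ≠ y) :
    IntervalIntegrable (fun l : ℝ => |l * y + (1 - l) * x| ^ r) volume 0 1 := by
  have h := ((intervalIntegrable_abs_rpow (x := x) (y := y) hr).comp_add_right x).comp_mul_left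
    (c := y - x)
  rw [sub_self, zero_div, div_self (sub_ne_zero.2 hxy.symm)] at h
  exact h.congr fun l _ => by ring_nf

theorem integral_abs_segment_rpow (hr : -1 < r) (hxy : x ≠ y) :
    ∫ l in (0 : ℝ)..1, |l * y + (1 - l) * x| ^ r =
      1 / (r + 1) * ((y * |y| ^ r - x * |x| ^ r) / (y - x)) := by
  have affine_form (l : ℝ) : l * y + (1 - l) * x = (y - x) * l + x := by ring
  calc
    _ = ∫ l in (0 : ℝ)..1, |(y - x) * l + x| ^ r := by simp only [affine_form]
    _ = (y - x)⁻¹ * ∫ u in x..y, |u| ^ r := by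
      rw [intervalIntegral.integral_comp_mul_add (fun u : ℝ => |u| ^ r) (sub_ne_zero.2 hxy.symm),
        mul_zero, mul_one, zero_add, sub_add_cancel, smul_eq_mul]
    _ = 1 / (r + 1) * ((y * |y| ^ r - x * |x| ^ r) / (y - x)) := by
      rw [integral_abs_rpow hr]
      ring

theorem add_pos_of_nonneg_of_ne (hx : 0 ≤ x) (hy : 0 ≤ y) (hxy : x ≠ y) : 0 < x + y := by
  rcases hxy.lt_or_gt with h | h <;> linarith

theorem ae_segment_ne_zero (hxy : x ≠ y) : ∀ᵐ l : ℝ, l * y + (1 - l) * x ≠ 0 := by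
  filter_upwards [Measure.ae_ne volume (x / (x - y))] with l hl h
  refine hl ((eq_div_iff (sub_ne_zero.2 hxy)).2 ?_)
  linarith

end AbsRpow

section NormSegment

variable {E : Type*} [SeminormedAddCommGroup E] [NormedSpace ℝ E] {a b : E} {l r : ℝ}

theorem norm_segment_le (hl : l ∈ Icc (0 : ℝ) 1) :
    ‖l • a + (1 - l) • b‖ ≤ l * ‖a‖ + (1 - l) * ‖b‖ := by
  simpa only [norm_smul_of_nonneg hl.1, norm_smul_of_nonneg (sub_nonneg.2 hl.2)]
    using norm_add_le (l • a) ((1 - l) • b)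

theorem abs_segment_neg_norm_le (hl : l ∈ Icc (0 : ℝ) 1) :
    |l * ‖a‖ + (1 - l) * (-‖b‖)| ≤ ‖l • a + (1 - l) • b‖ := by
  simpa only [norm_neg, sub_neg_eq_add, norm_smul_of_nonneg hl.1,
    norm_smul_of_nonneg (sub_nonneg.2 hl.2), mul_neg, ← sub_eq_add_neg]
    using abs_norm_sub_norm_le (l • a) (-((1 - l) • b))

theorem ae_norm_segment_rpow_mem_Icc (hr : r ≤ 0) (hab : 0 < ‖a‖ + ‖b‖) :
    ∀ᵐ l ∂volume.restrict (Icc (0 : ℝ) 1), ‖l • a + (1 - l) • b‖ ^ r ∈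
      Icc (|l * ‖a‖ + (1 - l) * ‖b‖| ^ r) (|l * ‖a‖ + (1 - l) * (-‖b‖)| ^ r) := by
  filter_upwards [ae_restrict_mem measurableSet_Icc,
    ae_restrict_of_ae (ae_segment_ne_zero (x := -‖b‖) (y := ‖a‖) (by linarith))] with l hl hne
  have lower_pos := abs_pos.2 hne
  have lower_le := abs_segment_neg_norm_le (a := a) (b := b) hl
  have le_upper := (norm_segment_le (a := a) (b := b) hl).trans (le_abs_self _)
  exact ⟨Real.rpow_le_rpow_of_nonpos (lower_pos.trans_le lower_le) le_upper hr,
    Real.rpow_le_rpow_of_nonpos lower_pos lower_le hr⟩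

theorem intervalIntegrable_norm_segment_rpow (hr : -1 < r) (hr0 : r ≤ 0) (hab : 0 < ‖a‖ + ‖b‖) :
    IntervalIntegrable (fun l : ℝ => ‖l • a + (1 - l) • b‖ ^ r) volume 0 1 := by
  refine (intervalIntegrable_abs_segment_rpow (x := -‖b‖) (y := ‖a‖) hr (by linarith)).mono_fun'
    ((Continuous.measurable (by fun_prop)).pow_const r).aestronglyMeasurable ?_
  rw [uIoc_of_le zero_le_one]
  filter_upwards [ae_restrict_of_ae_restrict_of_subset Ioc_subset_Icc_self
    (ae_norm_segment_rpow_mem_Icc hr0 hab)] with l hl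
  rw [Real.norm_of_nonneg (by positivity)]
  exact hl.2

theorem le_integral_norm_segment_rpow (hr : -1 < r) (hr0 : r ≤ 0) (hab : ‖a‖ ≠ ‖b‖) :
    1 / (r + 1) * ((‖a‖ ^ (r + 1) - ‖b‖ ^ (r + 1)) / (‖a‖ - ‖b‖)) ≤
      ∫ l in (0 : ℝ)..1, ‖l • a + (1 - l) • b‖ ^ r := by
  have norm_add_pos := add_pos_of_nonneg_of_ne (norm_nonneg a) (norm_nonneg b) hab
  calc
    _ = ∫ l in (0 : ℝ)..1, |l * ‖a‖ + (1 - l) * ‖b‖| ^ r := by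
      rw [integral_abs_segment_rpow hr hab.symm, mul_abs_rpow_of_nonneg hr (norm_nonneg a),
        mul_abs_rpow_of_nonneg hr (norm_nonneg b)]
    _ ≤ ∫ l in (0 : ℝ)..1, ‖l • a + (1 - l) • b‖ ^ r :=
      intervalIntegral.integral_mono_ae_restrict zero_le_one
        (intervalIntegrable_abs_segment_rpow hr hab.symm)
        (intervalIntegrable_norm_segment_rpow hr hr0 norm_add_pos)
        ((ae_norm_segment_rpow_mem_Icc hr0 norm_add_pos).mono fun _ h => h.1)

theorem integral_norm_segment_rpow_le (hr : -1 < r) (hr0 : r ≤ 0) (hab : 0 < ‖a‖ + ‖b‖) :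
    ∫ l in (0 : ℝ)..1, ‖l • a + (1 - l) • b‖ ^ r ≤
      1 / (r + 1) * ((‖a‖ ^ (r + 1) + ‖b‖ ^ (r + 1)) / (‖a‖ + ‖b‖)) := by
  have neg_norm_ne_norm : -‖b‖ ≠ ‖a‖ := by linarith
  calc
    _ ≤ ∫ l in (0 : ℝ)..1, |l * ‖a‖ + (1 - l) * (-‖b‖)| ^ r :=
      intervalIntegral.integral_mono_ae_restrict zero_le_one
        (intervalIntegrable_norm_segment_rpow hr hr0 hab)
        (intervalIntegrable_abs_segment_rpow hr neg_norm_ne_norm)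
        ((ae_norm_segment_rpow_mem_Icc hr0 hab).mono fun _ h => h.2)
    _ = 1 / (r + 1) * ((‖a‖ ^ (r + 1) + ‖b‖ ^ (r + 1)) / (‖a‖ + ‖b‖)) := by
      rw [integral_abs_segment_rpow hr neg_norm_ne_norm, abs_neg, neg_mul, sub_neg_eq_add,
        sub_neg_eq_add, mul_abs_rpow_of_nonneg hr (norm_nonneg a),
        mul_abs_rpow_of_nonneg hr (norm_nonneg b)]

end NormSegment

theorem stmt_16_general {E : Type*} [SeminormedAddCommGroup E] [NormedSpace ℝ E] {p : ℝ}
    (hp1 : 1 < p) (hp2 : p ≤ 2) {a b : E} (hab : ‖a‖ ≠ ‖b‖) :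
    1 / (p - 1) * ((‖a‖ ^ (p - 1) - ‖b‖ ^ (p - 1)) / (‖a‖ - ‖b‖)) ≤
      (∫ l in (0 : ℝ)..1, ‖l • a + (1 - l) • b‖ ^ (p - 2)) ∧
    (∫ l in (0 : ℝ)..1, ‖l • a + (1 - l) • b‖ ^ (p - 2)) ≤
      1 / (p - 1) * ((‖a‖ ^ (p - 1) + ‖b‖ ^ (p - 1)) / (‖a‖ + ‖b‖)) := by
  have hr : -1 < p - 2 := by linarith
  have hr0 : p - 2 ≤ 0 := by linarith
  have norm_add_pos := add_pos_of_nonneg_of_ne (norm_nonneg a) (norm_nonneg b) hab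
  rw [show p - 1 = p - 2 + 1 by ring]
  exact ⟨le_integral_norm_segment_rpow hr hr0 hab,
    integral_norm_segment_rpow_le hr hr0 norm_add_pos⟩

/-- (eq17) and (eq18): for `1 < p < 2` and `|a| > |b| > 0`,
`(1/(p-1)) (|a|^(p-1)-|b|^(p-1))/(|a|-|b|) ≤ ∫₀¹ |λa+(1-λ)b|^(p-2) dλ
  ≤ (1/(p-1)) (|a|^(p-1)+|b|^(p-1))/(|a|+|b|)`. -/
theorem stmt_16 (n : ℕ) (p : ℝ) (hp1 : 1 < p) (hp2 : p < 2) (a b : EuclideanSpace ℝ (Fin n))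
    (hb : 0 < ‖b‖) (hba : ‖b‖ < ‖a‖) :
    1 / (p - 1) * ((‖a‖ ^ (p - 1) - ‖b‖ ^ (p - 1)) / (‖a‖ - ‖b‖)) ≤
      (∫ l in (0 : ℝ)..1, ‖l • a + (1 - l) • b‖ ^ (p - 2)) ∧
    (∫ l in (0 : ℝ)..1, ‖l • a + (1 - l) • b‖ ^ (p - 2)) ≤
      1 / (p - 1) * ((‖a‖ ^ (p - 1) + ‖b‖ ^ (p - 1)) / (‖a‖ + ‖b‖)) :=
  stmt_16_general hp1 hp2.le hba.ne'
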